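/- arXiv:cond-mat/0412368 — 3 statements merged into one kernel-verified Lean document; each statement's English description precedes it below -/
import Mathlib

section
/- For all vertices i and j, the sequence t ↦ (P^t)_{ij} converges, as the integer t tends to infinity, to d(j) / Σ_k d(k). In particular the limit does not depend on the starting vertex i. -/
open Matrix Filter

/-!
The proof is Doeblin's contraction argument. Let `π j = d j / ∑ k, d k`; symmetry of `A` makes `π`
a stationary distribution of the stochastic matrix `P`. Connectedness together with the self-loops
gives one exponent `N` for which every entry of `P ^ N` is positive, hence at least some `ε > 0`.

On the space of vectors `f` with `π ⬝ᵥ f = 0`, which `P` preserves, `P ^ N` acts as the matrix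
`P ^ N - ε (1 ⊗ π)`, which is nonnegative with row sums `1 - ε`, and so contracts the sup norm by
the factor `1 - ε`. The sup norm of `P ^ t *ᵥ f` is nonincreasing in `t`, so it has a limit
`L ≥ 0`, and `L ≤ (1 - ε) L` forces `L = 0`. Applied to `f = e_j - π j`, whose image under `P ^ t`
is the vector of the differences `(P ^ t) i j - π j`, this is the claim.
-/

lemma norm_mulVec_le_of_nonneg_of_rowSum {n : ℕ} (Q : Matrix (Fin n) (Fin n) ℝ) (c : ℝ)
    (hc : 0 ≤ c) (hQ : ∀ i j, 0 ≤ Q i j) (hrow : ∀ i, ∑ j, Q i j = c) (f : Fin n → ℝ) :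
    ‖Q *ᵥ f‖ ≤ c * ‖f‖ := by
  rw [pi_norm_le_iff_of_nonneg (by positivity)]
  intro i
  calc ‖(Q *ᵥ f) i‖ ≤ ∑ j, ‖Q i j * f j‖ := by
        simpa only [Matrix.mulVec, dotProduct] using
          norm_sum_le Finset.univ fun j => Q i j * f j
    _ ≤ ∑ j, Q i j * ‖f‖ := by
        refine Finset.sum_le_sum fun j _ => ?_
        rw [norm_mul, Real.norm_of_nonneg (hQ i j)]
        exact mul_le_mul_of_nonneg_left (norm_le_pi_norm f j) (hQ i j)
    _ = c * ‖f‖ := by rw [← Finset.sum_mul, hrow]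

lemma pow_apply_pos_of_support {n : ℕ} {A P : Matrix (Fin n) (Fin n) ℝ}
    (hA : ∀ i j, 0 ≤ A i j) (hP : ∀ i j, 0 ≤ P i j) (hAP : ∀ i j, 0 < A i j → 0 < P i j) (k : ℕ) :
    ∀ i j, 0 < (A ^ k) i j → 0 < (P ^ k) i j := by
  induction k with
  | zero => intro i j h; simpa using h
  | succ k ih =>
    intro i j h
    rw [pow_succ, Matrix.mul_apply] at h ⊢
    obtain ⟨l, -, hl⟩ := Finset.exists_lt_of_sum_lt (s := Finset.univ) (f := fun _ => (0 : ℝ))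
      (by simpa using h)
    have h1 : 0 < (A ^ k) i l := pos_of_mul_pos_left hl (hA l j)
    have h2 : 0 < A l j := pos_of_mul_pos_right hl h1.le
    exact Finset.sum_pos' (fun m _ => mul_nonneg (Matrix.pow_apply_nonneg hP k i m) (hP m j))
      ⟨l, Finset.mem_univ _, mul_pos (ih i l h1) (hAP l j h2)⟩

/-- Positive diagonal entries (the self-loops) keep a positive entry positive in higher powers. -/
lemma pow_apply_pos_mono {n : ℕ} {P : Matrix (Fin n) (Fin n) ℝ} (hP : ∀ i j, 0 ≤ P i j)
    (hdiag : ∀ i, 0 < P i i) {i j : Fin n} {k m : ℕ} (hkm : k ≤ m) (h : 0 < (P ^ k) i j) :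
    0 < (P ^ m) i j := by
  induction m, hkm using Nat.le_induction with
  | base => exact h
  | succ m _ ih =>
    rw [pow_succ, Matrix.mul_apply]
    exact Finset.sum_pos' (fun l _ => mul_nonneg (Matrix.pow_apply_nonneg hP m i l) (hP l j))
      ⟨j, Finset.mem_univ _, mul_pos ih (hdiag j)⟩

/-- The convergence theorem for a stochastic matrix with stationary distribution `p` and some
entrywise positive power. -/
lemma tendsto_pow_apply_of_pow_pos {n : ℕ} {P : Matrix (Fin n) (Fin n) ℝ} (hP : ∀ i j, 0 ≤ P i j)
    (hrow : ∀ i, ∑ j, P i j = 1) {p : Fin n → ℝ} (hp0 : ∀ i, 0 ≤ p i) (hp1 : ∑ i, p i = 1)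
    (hstat : p ᵥ* P = p) {N : ℕ} (hN : ∀ i j, 0 < (P ^ N) i j) (i j : Fin n) :
    Tendsto (fun t : ℕ => (P ^ t) i j) atTop (nhds (p j)) := by
  have hone : P *ᵥ 1 = 1 := by
    ext i; simpa [Matrix.mulVec, dotProduct] using hrow i
  have hpow1 : ∀ t : ℕ, P ^ t *ᵥ 1 = 1 := by
    intro t
    induction t with
    | zero => simp
    | succ t ih => rw [pow_succ, ← Matrix.mulVec_mulVec, hone, ih]
  have hpstat : ∀ t : ℕ, p ᵥ* P ^ t = p := by
    intro t
    induction t with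
    | zero => simp
    | succ t ih => rw [pow_succ, ← Matrix.vecMul_vecMul, ih, hstat]
  obtain ⟨ε, hε, hεN⟩ : ∃ ε : ℝ, 0 < ε ∧ ∀ i j, ε ≤ (P ^ N) i j := by
    obtain ⟨⟨a, b⟩, -, hab⟩ := Finset.exists_min_image (Finset.univ : Finset (Fin n × Fin n))
      (fun x => (P ^ N) x.1 x.2) ⟨(i, j), Finset.mem_univ _⟩
    exact ⟨_, hN a b, fun i j => hab (i, j) (Finset.mem_univ _)⟩
  have hple : ∀ j, p j ≤ 1 := fun j =>
    hp1 ▸ Finset.single_le_sum (f := p) (fun i _ => hp0 i) (Finset.mem_univ j)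
  set Q : Matrix (Fin n) (Fin n) ℝ := P ^ N - Matrix.of (fun _ j => ε * p j) with hQdef
  have hQ : ∀ i j, 0 ≤ Q i j := by
    intro i j
    have h1 := hεN i j
    have h2 := mul_le_mul_of_nonneg_left (hple j) hε.le
    simp only [hQdef, Matrix.sub_apply, Matrix.of_apply]
    linarith
  have hQrow : ∀ i, ∑ j, Q i j = 1 - ε := by
    intro i
    have h1 : ∑ j, (P ^ N) i j = 1 := by
      simpa [Matrix.mulVec, dotProduct] using congrFun (hpow1 N) i
    simp only [hQdef, Matrix.sub_apply, Matrix.of_apply]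
    rw [Finset.sum_sub_distrib, ← Finset.mul_sum, hp1, h1, mul_one]
  have hε1 : 0 ≤ 1 - ε := hQrow i ▸ Finset.sum_nonneg fun j _ => hQ i j
  have hcontr : ∀ f : Fin n → ℝ, p ⬝ᵥ f = 0 → ‖P ^ N *ᵥ f‖ ≤ (1 - ε) * ‖f‖ := by
    intro f hf
    have : P ^ N *ᵥ f = Q *ᵥ f := by
      rw [hQdef, Matrix.sub_mulVec]
      have : (Matrix.of (fun (_ : Fin n) j => ε * p j)) *ᵥ f = 0 := by
        ext i
        simp only [Matrix.mulVec, dotProduct, Matrix.of_apply, mul_assoc, Pi.zero_apply]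
        rw [← Finset.mul_sum]
        simp only [dotProduct] at hf
        rw [hf, mul_zero]
      rw [this, sub_zero]
    rw [this]
    exact norm_mulVec_le_of_nonneg_of_rowSum Q _ hε1 hQ hQrow f
  set f₀ : Fin n → ℝ := Pi.single j 1 - p j • 1 with hf₀
  have hpf₀ : p ⬝ᵥ f₀ = 0 := by
    rw [hf₀, dotProduct_sub, dotProduct_smul, dotProduct_one, hp1, dotProduct_single]
    simp
  have hpf : ∀ t : ℕ, p ⬝ᵥ (P ^ t *ᵥ f₀) = 0 := by
    intro t
    rw [Matrix.dotProduct_mulVec, hpstat, hpf₀]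
  have hval : ∀ (t : ℕ) (i : Fin n), (P ^ t *ᵥ f₀) i = (P ^ t) i j - p j := by
    intro t i
    rw [hf₀, Matrix.mulVec_sub, Matrix.mulVec_smul, hpow1]
    simp
  have hanti : Antitone fun t : ℕ => ‖P ^ t *ᵥ f₀‖ := by
    refine antitone_nat_of_succ_le fun t => ?_
    rw [pow_succ', ← Matrix.mulVec_mulVec]
    simpa using norm_mulVec_le_of_nonneg_of_rowSum P 1 zero_le_one hP hrow (P ^ t *ᵥ f₀)
  have hlim := tendsto_atTop_ciInf hanti ⟨0, by rintro _ ⟨t, rfl⟩; exact norm_nonneg _⟩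
  set L := ⨅ t : ℕ, ‖P ^ t *ᵥ f₀‖
  have hL0 : 0 ≤ L := ge_of_tendsto' hlim fun t => norm_nonneg _
  have hLle : L ≤ (1 - ε) * L := by
    refine le_of_tendsto_of_tendsto' ((tendsto_add_atTop_iff_nat N).2 hlim)
      (hlim.const_mul (1 - ε)) fun t => ?_
    rw [add_comm t N, pow_add, ← Matrix.mulVec_mulVec]
    exact hcontr _ (hpf t)
  have hL : L = 0 := by nlinarith
  rw [hL] at hlim
  have h0 := (tendsto_pi_nhds.1 (tendsto_zero_iff_norm_tendsto_zero.2 hlim)) i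
  simp only [hval, Pi.zero_apply] at h0
  simpa using h0.add_const (p j)

/-- For all vertices `i` and `j`, `(P^t) i j` converges, as the integer `t`
tends to infinity, to `d j / ∑ k, d k` (independently of the starting vertex `i`). -/
theorem random_walk_limit_probability
    (n : ℕ) (hn : 0 < n)
    (A : Matrix (Fin n) (Fin n) ℝ)
    (hsym : A.IsSymm)
    (h01 : ∀ i j, A i j = 0 ∨ A i j = 1)
    (hloop : ∀ i, A i i = 1)
    (hconn : ∀ i j, ∃ k : ℕ, 0 < (A ^ k) i j)
    (d : Fin n → ℝ) (hd : ∀ i, d i = ∑ j, A i j)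
    (P : Matrix (Fin n) (Fin n) ℝ) (hP : ∀ i j, P i j = A i j / d i)
    (i j : Fin n) :
    Tendsto (fun t : ℕ => (P ^ t) i j) atTop (nhds (d j / ∑ k, d k)) := by
  have hA : ∀ i j, 0 ≤ A i j := fun i j => by rcases h01 i j with h | h <;> simp [h]
  have hdpos : ∀ i, 0 < d i := fun i => by
    rw [hd]
    exact Finset.sum_pos' (fun j _ => hA i j) ⟨i, Finset.mem_univ _, by simp [hloop]⟩
  have hS : 0 < ∑ k, d k := Finset.sum_pos (fun k _ => hdpos k) ⟨i, Finset.mem_univ _⟩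
  have hP0 : ∀ i j, 0 ≤ P i j := fun i j => by
    rw [hP]; exact div_nonneg (hA i j) (hdpos i).le
  have hAP : ∀ i j, 0 < A i j → 0 < P i j := fun i j h => by
    rw [hP]; exact div_pos h (hdpos i)
  have hdiag : ∀ i, 0 < P i i := fun i => hAP i i (by simp [hloop])
  have hrow : ∀ i, ∑ j, P i j = 1 := fun i => by
    simp only [hP]
    rw [← Finset.sum_div, ← hd, div_self (hdpos i).ne']
  choose k hk using hconn
  have hN : ∀ a b, 0 < (P ^ (∑ a, ∑ b, k a b)) a b := by
    intro a b
    refine pow_apply_pos_mono hP0 hdiag ?_ (pow_apply_pos_of_support hA hP0 hAP _ a b (hk a b))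
    exact (Finset.single_le_sum (f := fun b => k a b) (fun _ _ => Nat.zero_le _)
      (Finset.mem_univ b)).trans (Finset.single_le_sum (f := fun a => ∑ b, k a b)
      (fun _ _ => Nat.zero_le _) (Finset.mem_univ a))
  refine tendsto_pow_apply_of_pow_pos (p := fun j => d j / ∑ k, d k) hP0 hrow
    (fun j => div_nonneg (hdpos j).le hS.le) ?_ ?_ hN i j
  · rw [← Finset.sum_div, div_self hS.ne']
  · ext b
    -- Detailed balance: `d a * P a b = A a b = A b a`.
    have h : ∀ a, d a / (∑ k, d k) * P a b = A b a / ∑ k, d k := fun a => by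
      rw [hP, ← hsym.apply a b]
      have := (hdpos a).ne'
      field_simp
    simp only [Matrix.vecMul, dotProduct, h]
    rw [← Finset.sum_div, ← hd]
end

section
/- For disjoint nonempty finite subsets C₁, C₂ ⊆ I with union C₃ = C₁ ∪ C₂, the within-cluster sums of squares satisfy W(C₃) = W(C₁) + W(C₂) + (|C₁|·|C₂| / (|C₁| + |C₂|)) · ‖g(C₁) − g(C₂)‖². -/
/-!
By the Huygens identity `sum_norm_sub_sq_eq`, moving the reference point of a cluster `C` from its
centroid `g` to `p` raises the sum of squared distances by `|C| ‖g - p‖²`, the cross term vanishing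
because deviations from the centroid sum to zero. Apply this to `C₁` and `C₂` with `p` the centroid
of the union. Writing `n₁ = |C₁|`, `n₂ = |C₂|`, the point `p` is the weighted mean of the two
centroids, so `g₁ - p = n₂ / (n₁ + n₂) • (g₁ - g₂)` and `g₂ - p = -(n₁ / (n₁ + n₂)) • (g₁ - g₂)`;
the two increments add up to `n₁ n₂ / (n₁ + n₂) * ‖g₁ - g₂‖²`.
-/

/-- Huygens' identity; the hypothesis says that `m` is the centroid of the family over `C`. -/
theorem sum_norm_sub_sq_eq {E I : Type*} [NormedAddCommGroup E] [InnerProductSpace ℝ E]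
    (x : I → E) (C : Finset I) (m p : E) (hm : ∑ i ∈ C, x i = (C.card : ℝ) • m) :
    ∑ i ∈ C, ‖x i - p‖ ^ 2 = ∑ i ∈ C, ‖x i - m‖ ^ 2 + (C.card : ℝ) * ‖m - p‖ ^ 2 := by
  have hterm (i : I) :
      ‖x i - p‖ ^ 2 = ‖x i - m‖ ^ 2 + 2 * inner ℝ (x i - m) (m - p) + ‖m - p‖ ^ 2 := by
    rw [← norm_add_sq_real, sub_add_sub_cancel]
  have hzero : ∑ i ∈ C, (x i - m) = 0 := by
    rw [Finset.sum_sub_distrib, hm, Finset.sum_const, Nat.cast_smul_eq_nsmul, sub_self]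
  simp only [hterm]
  rw [Finset.sum_add_distrib, Finset.sum_add_distrib, ← Finset.mul_sum, ← sum_inner, hzero,
    inner_zero_left, Finset.sum_const, nsmul_eq_mul]
  ring

/-- for disjoint nonempty finite clusters `C₁`, `C₂` with union `C₃`,
`W(C₃) = W(C₁) + W(C₂) + (|C₁||C₂|/(|C₁|+|C₂|)) ‖g(C₁) − g(C₂)‖²`. -/
theorem ward_within_cluster_merge
    {E I : Type*} [NormedAddCommGroup E] [InnerProductSpace ℝ E]
    [Fintype I] [DecidableEq I]
    (x : I → E)
    (g : Finset I → E)
    (hg : ∀ C : Finset I, g C = ((C.card : ℝ))⁻¹ • ∑ i ∈ C, x i)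
    (W : Finset I → ℝ)
    (hW : ∀ C : Finset I, W C = ∑ i ∈ C, ‖x i - g C‖ ^ 2)
    (C₁ C₂ : Finset I) (h₁ : C₁.Nonempty) (h₂ : C₂.Nonempty)
    (hdisj : Disjoint C₁ C₂) :
    W (C₁ ∪ C₂) = W C₁ + W C₂ +
      ((C₁.card : ℝ) * (C₂.card : ℝ) / ((C₁.card : ℝ) + (C₂.card : ℝ))) *
        ‖g C₁ - g C₂‖ ^ 2 := by
  have hsum (C : Finset I) (hC : C.Nonempty) : ∑ i ∈ C, x i = (C.card : ℝ) • g C := by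
    rw [hg, smul_inv_smul₀ (Nat.cast_ne_zero.mpr hC.card_pos.ne')]
  have hp := hg (C₁ ∪ C₂)
  rw [Finset.sum_union hdisj, Finset.card_union_of_disjoint hdisj, hsum C₁ h₁, hsum C₂ h₂,
    Nat.cast_add] at hp
  rw [hW (C₁ ∪ C₂), Finset.sum_union hdisj,
    sum_norm_sub_sq_eq x C₁ (g C₁) (g (C₁ ∪ C₂)) (hsum C₁ h₁),
    sum_norm_sub_sq_eq x C₂ (g C₂) (g (C₁ ∪ C₂)) (hsum C₂ h₂), ← hW, ← hW]
  have hn₁ : (0 : ℝ) < C₁.card := Nat.cast_pos.mpr h₁.card_pos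
  have hn₂ : (0 : ℝ) < C₂.card := Nat.cast_pos.mpr h₂.card_pos
  generalize (C₁.card : ℝ) = a at *
  generalize (C₂.card : ℝ) = b at *
  have hab : a + b ≠ 0 := (add_pos hn₁ hn₂).ne'
  have hd₁ : g C₁ - g (C₁ ∪ C₂) = (b / (a + b)) • (g C₁ - g C₂) := by
    rw [hp]
    match_scalars <;> field_simp <;> ring
  have hd₂ : g C₂ - g (C₁ ∪ C₂) = (-(a / (a + b))) • (g C₁ - g C₂) := by
    rw [hp]
    match_scalars <;> field_simp <;> ring
  rw [hd₁, hd₂, norm_smul, norm_smul, mul_pow, mul_pow, Real.norm_eq_abs, Real.norm_eq_abs,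
    sq_abs, sq_abs]
  field_simp
  ring
end

section
/- (Lance–Williams–Jambu formula) Let C₁, C₂, C ⊆ I be pairwise disjoint nonempty finite subsets and set C₃ = C₁ ∪ C₂. Then Δσ(C₃, C) = [ (|C₁| + |C|)·Δσ(C₁,C) + (|C₂| + |C|)·Δσ(C₂,C) − |C|·Δσ(C₁,C₂) ] / (|C₁| + |C₂| + |C|). -/
/-!
By the König–Huygens identity `W(C) = ∑ ‖x i‖² - ‖S(C)‖² / |C|` with `S(C) = ∑ x i`
(`within_eq`), and both `∑ ‖x i‖²` and `S` are additive over disjoint unions. Hence each `Δσ` in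
the formula is a rational expression in the three cardinalities and the inner products of the
vectors `S(C₁)`, `S(C₂)`, `S(C)`; the claim is then an identity of rational functions.
-/

/-- König–Huygens identity. It also holds for `C = ∅`, where both sides vanish. -/
theorem within_eq {E I : Type*} [NormedAddCommGroup E] [InnerProductSpace ℝ E]
    (x : I → E) (C : Finset I) :
    ∑ i ∈ C, ‖x i - (C.card : ℝ)⁻¹ • ∑ j ∈ C, x j‖ ^ 2 =
      ∑ i ∈ C, ‖x i‖ ^ 2 - ‖∑ i ∈ C, x i‖ ^ 2 / C.card := by
  rcases C.eq_empty_or_nonempty with rfl | hC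
  · simp
  have hc : (C.card : ℝ) ≠ 0 := by exact_mod_cast hC.card_pos.ne'
  simp only [norm_sub_sq_real, Finset.sum_add_distrib, Finset.sum_sub_distrib,
    ← Finset.mul_sum, ← sum_inner, Finset.sum_const, nsmul_eq_mul, inner_smul_right,
    real_inner_self_eq_norm_sq, norm_smul, mul_pow, norm_inv, Real.norm_natCast]
  field_simp
  ring

/-- Lance–Williams–Jambu formula: for pairwise disjoint nonempty
clusters `C₁`, `C₂`, `C` and `C₃ = C₁ ∪ C₂`,
`Δσ(C₃,C) = ((|C₁|+|C|)Δσ(C₁,C) + (|C₂|+|C|)Δσ(C₂,C) − |C|Δσ(C₁,C₂)) / (|C₁|+|C₂|+|C|)`. -/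
theorem lance_williams_jambu
    {E I : Type*} [NormedAddCommGroup E] [InnerProductSpace ℝ E]
    [Fintype I] [DecidableEq I]
    (x : I → E)
    (g : Finset I → E)
    (hg : ∀ C : Finset I, g C = ((C.card : ℝ))⁻¹ • ∑ i ∈ C, x i)
    (W : Finset I → ℝ)
    (hW : ∀ C : Finset I, W C = ∑ i ∈ C, ‖x i - g C‖ ^ 2)
    (N : ℝ) (hN : 0 < N)
    (Δσ : Finset I → Finset I → ℝ)
    (hΔσ : ∀ C₁ C₂ : Finset I, C₁.Nonempty → C₂.Nonempty → Disjoint C₁ C₂ →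
      Δσ C₁ C₂ = (1 / N) * (W (C₁ ∪ C₂) - W C₁ - W C₂))
    (C₁ C₂ C : Finset I) (h₁ : C₁.Nonempty) (h₂ : C₂.Nonempty) (hC : C.Nonempty)
    (h₁₂ : Disjoint C₁ C₂) (h₁C : Disjoint C₁ C) (h₂C : Disjoint C₂ C) :
    Δσ (C₁ ∪ C₂) C =
      (((C₁.card : ℝ) + (C.card : ℝ)) * Δσ C₁ C +
        ((C₂.card : ℝ) + (C.card : ℝ)) * Δσ C₂ C -
        (C.card : ℝ) * Δσ C₁ C₂) /
        ((C₁.card : ℝ) + (C₂.card : ℝ) + (C.card : ℝ)) := by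
  have hW' : ∀ C : Finset I,
      W C = ∑ i ∈ C, ‖x i‖ ^ 2 - ‖∑ i ∈ C, x i‖ ^ 2 / C.card := fun C => by
    rw [hW, hg, within_eq]
  have h₃C : Disjoint (C₁ ∪ C₂) C := Finset.disjoint_union_left.2 ⟨h₁C, h₂C⟩
  rw [hΔσ _ _ (h₁.mono Finset.subset_union_left) hC h₃C, hΔσ _ _ h₁ hC h₁C,
    hΔσ _ _ h₂ hC h₂C, hΔσ _ _ h₁ h₂ h₁₂]
  simp only [hW', Finset.sum_union h₃C, Finset.sum_union h₁C, Finset.sum_union h₂C,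
    Finset.sum_union h₁₂, Finset.card_union_of_disjoint h₃C, Finset.card_union_of_disjoint h₁C,
    Finset.card_union_of_disjoint h₂C, Finset.card_union_of_disjoint h₁₂, Nat.cast_add,
    norm_add_sq_real, inner_add_left]
  have ha : (0 : ℝ) < C₁.card := by exact_mod_cast h₁.card_pos
  have hb : (0 : ℝ) < C₂.card := by exact_mod_cast h₂.card_pos
  have hc : (0 : ℝ) < C.card := by exact_mod_cast hC.card_pos
  generalize (C₁.card : ℝ) = a at *
  generalize (C₂.card : ℝ) = b at *
  generalize (C.card : ℝ) = c at *
  field_simp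
  ring
end
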